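/- arXiv:1605.00836 — 2 statements merged into one kernel-verified Lean document; each statement's English description precedes it below -/
import Mathlib

section
/- Let $\Omega \subset \mathbb{R}^N$ be a bounded domain, $\alpha, \beta \in (0,1)$, $T > 0$, and let $u(x,t)$ be $C^2$ in $x$ and $C^1$ in $t$ on $\Omega \times (0,T)$, continuous on $\bar{\Omega} \times [0,T]$, with $u = 0$ in $\mathbb{R}^N \setminus \Omega$ for all $t \geq 0$. If $u$ satisfies $\partial_t^\alpha(u - u_0) + (-\Delta)^\beta u = f$ in $\Omega \times (0,T)$ with $f \geq 0$ in $\bar{\Omega} \times [0,T]$, $u(\cdot,0) = u_0 \geq 0$ in $\Omega$, then $u \geq 0$ in $\bar{\Omega} \times [0,T]$. -/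
open MeasureTheory Set

noncomputable section

/-- Laplace convolution on `[0,t]`. -/
def tconv (k u : ℝ → ℝ) (t : ℝ) : ℝ := ∫ s in Set.Ioc 0 t, k (t - s) * u s

/-- Riemann–Liouville fractional derivative of order `α`. -/
def riemannLiouville (α : ℝ) (v : ℝ → ℝ) (t : ℝ) : ℝ :=
  deriv (tconv (fun s => s ^ (-α) / Real.Gamma (1 - α)) v) t

/-- The normalizing constant `c_{N,β}` of the fractional Laplacian. -/
def fracLapConst (N : ℕ) (β : ℝ) : ℝ :=
  β * 2 ^ (2 * β) * Real.Gamma ((N + 2 * β) / 2) /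
    (Real.pi ^ ((N : ℝ) / 2) * Real.Gamma (1 - β))

/-- The fractional Laplacian `(-Δ)^β`. -/
def fracLap (N : ℕ) (β : ℝ) (v : EuclideanSpace ℝ (Fin N) → ℝ)
    (x : EuclideanSpace ℝ (Fin N)) : ℝ :=
  fracLapConst N β * ∫ y, (v x - v y) / ‖x - y‖ ^ ((N : ℝ) + 2 * β)

section Helpers
open Filter Topology

lemma rl_nonpos (α t0 : ℝ) (hα : α ∈ Ioo (0:ℝ) 1) (ht0 : 0 < t0) (v : ℝ → ℝ)
    (hv : ContinuousOn v (Icc 0 t0)) (hd : DifferentiableAt ℝ v t0)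
    (hmin : ∀ s ∈ Icc 0 t0, v t0 ≤ v s) (hneg : v t0 ≤ 0) :
    riemannLiouville α v t0 ≤ 0 := by
  unfold riemannLiouville
  set k : ℝ → ℝ := fun s => s ^ (-α) / Real.Gamma (1 - α) with hk
  by_cases hD : DifferentiableAt ℝ (tconv k v) t0
  swap
  · rw [deriv_zero_of_not_differentiableAt hD]
  have hG : 0 < Real.Gamma (1 - α) := Real.Gamma_pos_of_pos (by linarith [hα.2])
  have hki : ∀ a b, IntervalIntegrable k volume a b := fun a b =>
    (intervalIntegral.intervalIntegrable_rpow' (by linarith [hα.2])).div_const _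
  have hki' : ∀ t a b, IntervalIntegrable (fun s => k (t - s)) volume a b := by
    intro t a b
    have := (hki (t - a) (t - b)).comp_sub_left t
    simpa using this
  have hknn : ∀ s, 0 ≤ s → 0 ≤ k s := fun s hs => by positivity
  set K : ℝ → ℝ := fun h => ∫ s in (0:ℝ)..h, k s with hKdef
  have hK : ∀ h, K h = h ^ (1 - α) / (1 - α) / Real.Gamma (1 - α) := by
    intro h
    simp only [hKdef, hk]
    rw [intervalIntegral.integral_div, integral_rpow (Or.inl (by linarith [hα.2]))]
    have h1 : -α + 1 = 1 - α := by ring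
    rw [h1, Real.zero_rpow (by linarith [hα.2]), sub_zero]
  have hKc : Tendsto (fun t => K (t0 - t)) (𝓝[<] t0) (𝓝 0) := by
    have h1 : ContinuousAt (fun t => K (t0 - t)) t0 := by
      simp only [hK]
      have : ContinuousAt (fun t : ℝ => (t0 - t) ^ (1 - α)) t0 :=
        ContinuousAt.rpow_const (by fun_prop) (Or.inr (by linarith [hα.2]))
      exact (this.div_const _).div_const _
    have h2 := h1.tendsto
    simp only [sub_self] at h2
    have h3 : K 0 = 0 := by simp [hKdef]
    rw [h3] at h2
    exact h2.mono_left nhdsWithin_le_nhds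
  obtain ⟨C, hC0, hC⟩ := hd.isBigO_sub.exists_nonneg
  rw [Asymptotics.isBigOWith_iff] at hC
  obtain ⟨δ, hδ, hball⟩ := Metric.eventually_nhds_iff.1 hC
  have key : ∀ t1, 0 < t1 → t0 - δ < t1 → t1 < t0 →
      tconv k v t0 - tconv k v t1 ≤ C * (t0 - t1) * K (t0 - t1) := by
    intro t1 h0 h1 h2
    have sub1 : uIcc 0 t1 ⊆ Icc 0 t0 := by
      rw [uIcc_of_le h0.le]; exact Icc_subset_Icc_right h2.le
    have sub2 : uIcc t1 t0 ⊆ Icc 0 t0 := by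
      rw [uIcc_of_le h2.le]; exact Icc_subset_Icc_left h0.le
    have e0 : tconv k v t0 = (∫ s in (0:ℝ)..t1, k (t0 - s) * v s) + ∫ s in t1..t0, k (t0 - s) * v s := by
      rw [intervalIntegral.integral_add_adjacent_intervals
        ((hki' _ _ _).mul_continuousOn (hv.mono sub1))
        ((hki' _ _ _).mul_continuousOn (hv.mono sub2)), tconv,
        intervalIntegral.integral_of_le ht0.le]
    have e1 : tconv k v t1 = ∫ s in (0:ℝ)..t1, k (t1 - s) * v s := by
      rw [tconv, intervalIntegral.integral_of_le h0.le]
    have i1 : (∫ s in (0:ℝ)..t1, k (t0 - s) * v s) - (∫ s in (0:ℝ)..t1, k (t1 - s) * v s)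
        ≤ ∫ s in (0:ℝ)..t1, (k (t0 - s) - k (t1 - s)) * v t0 := by
      rw [← intervalIntegral.integral_sub ((hki' _ _ _).mul_continuousOn (hv.mono sub1))
        ((hki' _ _ _).mul_continuousOn (hv.mono sub1))]
      apply intervalIntegral.integral_mono_on_of_le_Ioo h0.le
      · exact ((hki' _ _ _).mul_continuousOn (hv.mono sub1)).sub
          ((hki' _ _ _).mul_continuousOn (hv.mono sub1))
      · exact ((hki' _ _ _).sub (hki' _ _ _)).mul_const _
      · intro s hs
        have hkm : k (t0 - s) ≤ k (t1 - s) := by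
          apply div_le_div_of_nonneg_right _ hG.le
          exact Real.rpow_le_rpow_of_nonpos (by linarith [hs.2]) (by linarith) (by linarith [hα.1])
        have := hmin s ⟨hs.1.le, by linarith [hs.2]⟩
        nlinarith
    have i2 : (∫ s in t1..t0, k (t0 - s) * v s)
        ≤ ∫ s in t1..t0, k (t0 - s) * (v t0 + C * (t0 - t1)) := by
      apply intervalIntegral.integral_mono_on h2.le
      · exact ((hki' _ _ _).mul_continuousOn (hv.mono sub2))
      · exact (hki' _ _ _).mul_const _
      · intro s hs
        apply mul_le_mul_of_nonneg_left _ (hknn _ (by linarith [hs.2]))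
        have hb := @hball s (by rw [Real.dist_eq, abs_lt]; constructor <;> linarith [hs.1, hs.2])
        rw [Real.norm_eq_abs, Real.norm_eq_abs, abs_of_nonpos (by linarith [hs.2] : s - t0 ≤ 0)] at hb
        have := le_abs_self (v s - v t0)
        have : C * -(s - t0) ≤ C * (t0 - t1) := mul_le_mul_of_nonneg_left (by linarith [hs.1]) hC0
        linarith
    have c1 : ∫ s in (0:ℝ)..t1, k (t0 - s) = K t0 - K (t0 - t1) := by
      rw [intervalIntegral.integral_comp_sub_left k, sub_zero, hKdef]
      simp only
      rw [intervalIntegral.integral_interval_sub_left (hki _ _) (hki _ _)]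
    have c2 : ∫ s in (0:ℝ)..t1, k (t1 - s) = K t1 := by
      rw [intervalIntegral.integral_comp_sub_left k, sub_zero, sub_self]
    have c3 : ∫ s in t1..t0, k (t0 - s) = K (t0 - t1) := by
      rw [intervalIntegral.integral_comp_sub_left k, sub_self]
    rw [intervalIntegral.integral_mul_const, intervalIntegral.integral_sub (hki' _ _ _) (hki' _ _ _),
      c1, c2] at i1
    rw [intervalIntegral.integral_mul_const, c3] at i2
    have hKm : K t1 ≤ K t0 := by
      rw [hK, hK]
      have h1α : 0 < 1 - α := by linarith [hα.2]
      gcongr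
    nlinarith
  have hs := (hasDerivAt_iff_tendsto_slope_left_right.1 hD.hasDerivAt).1
  have hlim : Tendsto (fun t => C * K (t0 - t)) (𝓝[<] t0) (𝓝 0) := by
    simpa using hKc.const_mul C
  refine le_of_tendsto_of_tendsto hs hlim ?_
  have e1 : ∀ᶠ t in 𝓝[<] t0, t ∈ Ioo (max 0 (t0 - δ)) t0 :=
    Ioo_mem_nhdsLT (by simp [ht0, hδ])
  filter_upwards [e1] with t hmem
  have hm := hmem.1
  rw [max_lt_iff] at hm
  have := key t hm.1 hm.2 hmem.2
  rw [slope_comm, slope_def_field, div_le_iff₀ (by linarith [hmem.2])]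
  linarith


lemma fl_const_pos (N : ℕ) (β : ℝ) (hβ : β ∈ Ioo (0:ℝ) 1) : 0 < fracLapConst N β := by
  have h1 := hβ.1
  have h2 : 0 < Real.Gamma (1 - β) := Real.Gamma_pos_of_pos (by linarith [hβ.2])
  have h3 : 0 < Real.Gamma ((N + 2 * β) / 2) := Real.Gamma_pos_of_pos (by positivity)
  unfold fracLapConst
  positivity

lemma dom_integrable (N : ℕ) (hN : 1 ≤ N) (β : ℝ) (hβ : β ∈ Ioo (0:ℝ) 1) :
    Integrable (fun z : EuclideanSpace ℝ (Fin N) =>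
      min (‖z‖ ^ 2) 1 / ‖z‖ ^ ((N : ℝ) + 2 * β)) := by
  have : Nonempty (Fin N) := ⟨⟨0, hN⟩⟩
  have := (integrable_fun_norm_addHaar (volume : Measure (EuclideanSpace ℝ (Fin N)))
    (f := fun r : ℝ => min (r ^ 2) 1 / r ^ ((N : ℝ) + 2 * β))).2
  apply this
  rw [finrank_euclideanSpace_fin, ← Ioc_union_Ioi_eq_Ioi zero_le_one]
  have hc : ∀ y : ℝ, 0 < y → y ^ (N - 1) = y ^ ((N : ℝ) - 1) := by
    intro y hy
    rw [← Real.rpow_natCast, Nat.cast_sub hN, Nat.cast_one]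
  apply IntegrableOn.union
  · have h1 : IntegrableOn (fun y : ℝ => y ^ (1 - 2 * β)) (Ioc 0 1) := by
      rw [← intervalIntegrable_iff_integrableOn_Ioc_of_le zero_le_one]
      exact intervalIntegral.intervalIntegrable_rpow' (by linarith [hβ.2])
    refine h1.congr_fun ?_ measurableSet_Ioc
    intro y hy
    have hy0 := hy.1
    have hm : min (y ^ 2) 1 = y ^ (2:ℝ) := by
      rw [min_eq_left (by nlinarith [hy.2]), Real.rpow_two]
    simp only [smul_eq_mul]
    rw [hm, hc y hy0, ← Real.rpow_sub hy0, ← Real.rpow_add hy0]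
    congr 1; ring
  · have h1 : IntegrableOn (fun y : ℝ => y ^ (-1 - 2 * β)) (Ioi 1) :=
      integrableOn_Ioi_rpow_of_lt (by linarith [hβ.1]) one_pos
    refine h1.congr_fun ?_ measurableSet_Ioi
    intro y hy
    have hy1 : 1 < y := hy
    have hy0 : 0 < y := by linarith
    have hm : min (y ^ 2) 1 = y ^ (0:ℝ) := by
      rw [min_eq_right (by nlinarith), Real.rpow_zero]
    simp only [smul_eq_mul]
    rw [hm, hc y hy0, ← Real.rpow_sub hy0, ← Real.rpow_add hy0]
    congr 1; ring

lemma quad_bound {E : Type*} [NormedAddCommGroup E] [NormedSpace ℝ E] (v : E → ℝ) (x : E)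
    (hv : ContDiffAt ℝ 2 v x) (hmin : IsLocalMin v x) :
    ∃ C r : ℝ, 0 ≤ C ∧ 0 < r ∧ ∀ y, ‖x - y‖ < r → |v x - v y| ≤ C * ‖x - y‖ ^ 2 := by
  have h0 : fderiv ℝ v x = 0 := hmin.fderiv_eq_zero
  have h1 : DifferentiableAt ℝ (fderiv ℝ v) x :=
    (hv.fderiv_right (m := 1) (by norm_num)).differentiableAt (by norm_num)
  obtain ⟨C, hC0, hC⟩ := h1.isBigO_sub.exists_nonneg
  rw [Asymptotics.isBigOWith_iff] at hC
  have hd : ∀ᶠ y in 𝓝 x, DifferentiableAt ℝ v y := by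
    filter_upwards [hv.eventually (by simp)] with y hy
    exact hy.differentiableAt (by norm_num)
  obtain ⟨r, hr, hb⟩ := Metric.eventually_nhds_iff.1 (hC.and hd)
  refine ⟨C, r, hC0, hr, fun y hy => ?_⟩
  have hsub : ∀ z ∈ Metric.closedBall x ‖x - y‖, dist z x < r := fun z hz =>
    lt_of_le_of_lt (Metric.mem_closedBall.1 hz) hy
  have := Convex.norm_image_sub_le_of_norm_fderiv_le (𝕜 := ℝ) (f := v) (C := C * ‖x - y‖)
    (s := Metric.closedBall x ‖x - y‖) (x := y) (y := x)
    (fun z hz => (hb (hsub z hz)).2) (fun z hz => by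
      have := (hb (hsub z hz)).1
      rw [h0, sub_zero] at this
      refine this.trans (mul_le_mul_of_nonneg_left ?_ hC0)
      rw [← dist_eq_norm]; exact Metric.mem_closedBall.1 hz) (convex_closedBall _ _)
    (by rw [Metric.mem_closedBall, dist_comm, dist_eq_norm])
    (Metric.mem_closedBall_self (norm_nonneg _))
  rw [Real.norm_eq_abs] at this
  linarith

lemma fl_neg (N : ℕ) (hN : 1 ≤ N) (β : ℝ) (hβ : β ∈ Ioo (0:ℝ) 1)
    (Ω : Set (EuclideanSpace ℝ (Fin N))) (hΩb : Bornology.IsBounded Ω)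
    (v : EuclideanSpace ℝ (Fin N) → ℝ) (x : EuclideanSpace ℝ (Fin N))
    (hv : ContDiffAt ℝ 2 v x) (hcont : Continuous v) (hmin : ∀ y, v x ≤ v y) (hx : v x < 0)
    (hext : ∀ y ∉ Ω, v y = 0) : fracLap N β v x < 0 := by
  have : Nonempty (Fin N) := ⟨⟨0, hN⟩⟩
  obtain ⟨C, r, hC0, hr, hq⟩ := quad_bound v x hv (Eventually.of_forall hmin)
  obtain ⟨M, hM⟩ : ∃ M, ∀ y, |v x - v y| ≤ M := by
    have hcpt : IsCompact (closure Ω) := hΩb.isCompact_closure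
    obtain ⟨M, hM⟩ := hcpt.exists_bound_of_continuousOn (f := fun y => v x - v y)
      (by fun_prop)
    refine ⟨max M |v x|, fun y => ?_⟩
    by_cases hy : y ∈ Ω
    · exact (hM y (subset_closure hy)).trans (le_max_left _ _)
    · rw [hext y hy, sub_zero]; exact le_max_right _ _
  have hM0 : 0 ≤ M := (abs_nonneg _).trans (hM x)
  set ρ := min r 1 with hρ
  have hρ0 : 0 < ρ := lt_min hr one_pos
  have hbd : ∀ y, |v x - v y| ≤ (C + M / ρ ^ 2) * min (‖x - y‖ ^ 2) 1 := by
    intro y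
    have hn := norm_nonneg (x - y)
    have hMρ : 0 ≤ M / ρ ^ 2 := by positivity
    by_cases hy : ‖x - y‖ < ρ
    · have h1 : ‖x - y‖ ≤ 1 := (hy.trans_le (min_le_right _ _)).le
      rw [min_eq_left (by nlinarith)]
      have := hq y (hy.trans_le (min_le_left _ _))
      nlinarith [sq_nonneg ‖x - y‖, mul_nonneg hMρ (sq_nonneg ‖x - y‖)]
    · push Not at hy
      have h1 : ρ ^ 2 ≤ min (‖x - y‖ ^ 2) 1 := by
        apply le_min
        · gcongr
        · have : ρ ≤ 1 := min_le_right _ _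
          nlinarith
      have h2 : M / ρ ^ 2 * ρ ^ 2 = M := by field_simp
      have h3 := mul_le_mul_of_nonneg_left h1 hMρ
      have h4 : 0 ≤ C * min (‖x - y‖ ^ 2) 1 := by positivity
      have := hM y
      linarith [add_mul C (M / ρ ^ 2) (min (‖x - y‖ ^ 2) 1)]
  have hint : Integrable (fun y => (v y - v x) / ‖x - y‖ ^ ((N : ℝ) + 2 * β)) := by
    have hdom := ((dom_integrable N hN β hβ).comp_sub_left x).const_mul (C + M / ρ ^ 2)
    refine hdom.mono' ?_ (Eventually.of_forall fun y => ?_)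
    · apply Measurable.aestronglyMeasurable
      have := hcont.measurable
      fun_prop
    · rw [norm_div, Real.norm_eq_abs, Real.norm_eq_abs, abs_sub_comm,
        abs_of_nonneg (Real.rpow_nonneg (norm_nonneg _) _), ← mul_div_assoc]
      exact div_le_div_of_nonneg_right (hbd y) (Real.rpow_nonneg (norm_nonneg _) _)
  have hpos : 0 < ∫ y, (v y - v x) / ‖x - y‖ ^ ((N : ℝ) + 2 * β) := by
    rw [integral_pos_iff_support_of_nonneg _ hint]
    · have hsup : Ωᶜ ⊆ Function.support
          (fun y => (v y - v x) / ‖x - y‖ ^ ((N : ℝ) + 2 * β)) := by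
        intro y hy
        have hy0 := hext y hy
        have hxy : x - y ≠ 0 := by
          intro h
          rw [sub_eq_zero] at h
          rw [h] at hx
          linarith
        have : 0 < ‖x - y‖ ^ ((N : ℝ) + 2 * β) := Real.rpow_pos_of_pos (norm_pos_iff.2 hxy) _
        rw [Function.mem_support, hy0]
        exact (div_pos (by linarith) this).ne'
      refine lt_of_lt_of_le ?_ (measure_mono hsup)
      rw [pos_iff_ne_zero]
      intro h0
      have h1 : volume (univ : Set (EuclideanSpace ℝ (Fin N))) = ⊤ :=
        measure_univ_of_isAddLeftInvariant _
      have h2 : volume Ω < ⊤ := hΩb.measure_lt_top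
      have h3 := measure_union_le (μ := volume) Ω Ωᶜ
      rw [union_compl_self, h1, h0, add_zero] at h3
      exact absurd h2 (not_lt.2 h3)
    · intro y
      exact div_nonneg (by linarith [hmin y]) (Real.rpow_nonneg (norm_nonneg _) _)
  unfold fracLap
  have e : (∫ y, (v x - v y) / ‖x - y‖ ^ ((N : ℝ) + 2 * β)) =
      -∫ y, (v y - v x) / ‖x - y‖ ^ ((N : ℝ) + 2 * β) := by
    rw [← integral_neg]
    congr 1; ext y; rw [← neg_div, neg_sub]
  rw [e]
  nlinarith [fl_const_pos N β hβ]

end Helpers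

open Filter Topology in
/-- Maximum principle (nonnegativity) for classical solutions of the
time-space fractional diffusion equation. -/
theorem classical_solution_nonneg (N : ℕ) (hN : 1 ≤ N) (α β T : ℝ)
    (hα : α ∈ Ioo (0:ℝ) 1) (hβ : β ∈ Ioo (0:ℝ) 1) (hT : 0 < T)
    (Ω : Set (EuclideanSpace ℝ (Fin N)))
    (hΩo : IsOpen Ω) (hΩc : IsConnected Ω) (hΩb : Bornology.IsBounded Ω)
    (u : EuclideanSpace ℝ (Fin N) → ℝ → ℝ)
    (u0 : EuclideanSpace ℝ (Fin N) → ℝ)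
    (f : EuclideanSpace ℝ (Fin N) → ℝ → ℝ)
    -- u is C² in x on Ω for each t ∈ (0,T)
    (hx : ∀ t ∈ Ioo 0 T, ContDiffOn ℝ 2 (fun x => u x t) Ω)
    -- u is C¹ in t on (0,T) for each x ∈ Ω
    (ht : ∀ x ∈ Ω, ContDiffOn ℝ 1 (u x) (Ioo 0 T))
    -- u is continuous on cl(Ω) × [0,T]
    (hc : ContinuousOn (fun p : EuclideanSpace ℝ (Fin N) × ℝ => u p.1 p.2)
      (closure Ω ×ˢ Icc 0 T))
    -- zero exterior condition for t ≥ 0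
    (hext : ∀ x ∉ Ω, ∀ t, 0 ≤ t → u x t = 0)
    -- initial condition
    (hinit : ∀ x ∈ Ω, u x 0 = u0 x)
    (hu0 : ∀ x ∈ Ω, 0 ≤ u0 x)
    (hf : ∀ x ∈ closure Ω, ∀ t ∈ Icc 0 T, 0 ≤ f x t)
    -- the equation in Ω × (0,T)
    (heq : ∀ x ∈ Ω, ∀ t ∈ Ioo 0 T,
      riemannLiouville α (fun s => u x s - u0 x) t
        + fracLap N β (fun y => u y t) x = f x t) :
    ∀ x ∈ closure Ω, ∀ t ∈ Icc 0 T, 0 ≤ u x t := by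
  have main : ∀ T' ∈ Ioo 0 T, ∀ x ∈ closure Ω, ∀ t ∈ Icc 0 T', 0 ≤ u x t := by
    intro T' hT' x hxc t htm
    by_contra hlt
    push Not at hlt
    have hcpt : IsCompact (closure Ω ×ˢ Icc 0 T') := hΩb.isCompact_closure.prod isCompact_Icc
    have hsub : closure Ω ×ˢ Icc 0 T' ⊆ closure Ω ×ˢ Icc 0 T :=
      prod_mono le_rfl (Icc_subset_Icc_right hT'.2.le)
    obtain ⟨⟨x0, t0⟩, ⟨hx0c, ht0m⟩, hmin⟩ :=
      hcpt.exists_isMinOn ⟨(x, t), hxc, htm⟩ (hc.mono hsub)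
    simp only at hx0c ht0m
    have hmin' : ∀ y ∈ closure Ω, ∀ s ∈ Icc 0 T', u x0 t0 ≤ u y s := fun y hy s hs =>
      hmin (show (y, s) ∈ closure Ω ×ˢ Icc 0 T' from ⟨hy, hs⟩)
    have hneg : u x0 t0 < 0 := (hmin' x hxc t htm).trans_lt hlt
    have hx0 : x0 ∈ Ω := by
      by_contra h
      rw [hext x0 h t0 ht0m.1] at hneg
      exact lt_irrefl _ hneg
    have ht00 : 0 < t0 := by
      rcases ht0m.1.lt_or_eq with h | h
      · exact h
      · rw [← h, hinit x0 hx0] at hneg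
        exact absurd (hu0 x0 hx0) (not_le.2 hneg)
    have ht0T : t0 ∈ Ioo 0 T := ⟨ht00, ht0m.2.trans_lt hT'.2⟩
    have hrl : riemannLiouville α (fun s => u x0 s - u0 x0) t0 ≤ 0 := by
      apply rl_nonpos α t0 hα ht00
      · refine ContinuousOn.sub ?_ continuousOn_const
        exact hc.comp (f := fun s : ℝ => (x0, s)) (by fun_prop)
          (fun s hs => ⟨hx0c, hs.1, hs.2.trans ht0T.2.le⟩)
      · exact ((((ht x0 hx0).contDiffAt (Ioo_mem_nhds ht0T.1 ht0T.2)).differentiableAt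
          (by norm_num))).sub_const _
      · intro s hs
        have := hmin' x0 hx0c s ⟨hs.1, hs.2.trans ht0m.2⟩
        linarith
      · have := hu0 x0 hx0
        linarith
    have hfl : fracLap N β (fun y => u y t0) x0 < 0 := by
      apply fl_neg N hN β hβ Ω hΩb
      · exact (hx t0 ht0T).contDiffAt (hΩo.mem_nhds hx0)
      · rw [← continuousOn_univ]
        have h1 : ContinuousOn (fun y => u y t0) (closure Ω) :=
          hc.comp (f := fun y : EuclideanSpace ℝ (Fin N) => (y, t0)) (by fun_prop)
            (fun y hy => ⟨hy, ht00.le, ht0T.2.le⟩)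
        have h2 : ContinuousOn (fun y => u y t0) Ωᶜ :=
          (continuousOn_const (c := (0:ℝ))).congr (fun y hy => hext y hy t0 ht00.le)
        refine (h1.union_of_isClosed h2 isClosed_closure hΩo.isClosed_compl).mono ?_
        intro y _
        by_cases hy : y ∈ Ω
        · exact Or.inl (subset_closure hy)
        · exact Or.inr hy
      · intro y
        by_cases hy : y ∈ Ω
        · exact hmin' y (subset_closure hy) t0 ht0m
        · show u x0 t0 ≤ u y t0
          rw [hext y hy t0 ht00.le]
          exact hneg.le
      · exact hneg
      · exact fun y hy => hext y hy t0 ht00.le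
    have h1 := heq x0 hx0 t0 ht0T
    have h2 := hf x0 hx0c t0 ⟨ht00.le, ht0T.2.le⟩
    linarith
  intro x hxc t htm
  rcases htm.2.lt_or_eq with h | h
  · obtain ⟨T', h1, h2⟩ := exists_between h
    exact main T' ⟨htm.1.trans_lt h1, h2⟩ x hxc t ⟨htm.1, h1.le⟩
  · subst h
    have hcx : ContinuousOn (u x) (Icc 0 t) :=
      hc.comp (f := fun s : ℝ => (x, s)) (by fun_prop) (fun s hs => ⟨hxc, hs⟩)
    have h1 : Tendsto (u x) (𝓝[Ioo 0 t] t) (𝓝 (u x t)) :=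
      (hcx t ⟨hT.le, le_rfl⟩).mono_left (nhdsWithin_mono _ Ioo_subset_Icc_self)
    have : (𝓝[Ioo 0 t] t).NeBot := by
      rw [nhdsWithin_Ioo_eq_nhdsLT hT]; infer_instance
    refine ge_of_tendsto h1 ?_
    filter_upwards [self_mem_nhdsWithin] with s hs
    exact main s hs x hxc s ⟨hs.1.le, le_rfl⟩
end
end

section
/- Let $\Omega \subset \mathbb{R}^N$ be a bounded domain, $\alpha, \beta \in (0,1)$, $T > 0$, and let $u$ be a function $C^2$ in $x$, $C^1$ in $t$ on $\Omega \times (0,T)$, continuous on $\bar{\Omega} \times [0,T]$, vanishing outside $\Omega$. If $\partial_t^\alpha(u - u_0) + (-\Delta)^\beta u \leq 0$ in $\Omega \times (0,T]$, where $u_0 = u(\cdot,0)$, then $\max_{\bar{Q}_T} u = \max_{\partial_p Q_T} u$, where $Q_T = \Omega \times (0,T)$ and $\partial_p Q_T = (\Omega \times \{0\}) \cup (\partial\Omega \times [0,T])$. -/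
open MeasureTheory Set

noncomputable section

open Filter Topology

theorem aux_int {k g : ℝ → ℝ} {a b x : ℝ} (hk : ∀ a b, IntervalIntegrable k volume a b)
    (hab : a ≤ b) (hg : ContinuousOn g (Icc a b)) :
    IntegrableOn (fun s => k (x - s) * g s) (Ioc a b) := by
  have h1 : IntervalIntegrable (fun s => k (x - s)) volume a b := by
    have := (hk (x - a) (x - b)).comp_sub_left x
    simpa using this
  have h2 := h1.mul_continuousOn (g := g) (by rwa [uIcc_of_le hab])
  exact (intervalIntegrable_iff_integrableOn_Ioc_of_le hab).1 h2

theorem aux_conv {k g : ℝ → ℝ} (hk : ∀ a b, IntervalIntegrable k volume a b) (hk0 : k 0 = 0)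
    (hg : ContDiff ℝ 1 g) (hgc : HasCompactSupport g) (hg0 : ∀ s ≤ 0, g s = 0) (x : ℝ) :
    DifferentiableAt ℝ (tconv k g) x := by
  have hl : LocallyIntegrable ((Ioi 0).indicator k) volume := by
    rw [locallyIntegrable_iff]
    intro K hK
    apply Integrable.indicator _ measurableSet_Ioi
    obtain ⟨R, hR⟩ := hK.isBounded.subset_closedBall 0
    rw [Real.closedBall_eq_Icc] at hR
    rcases le_or_gt 0 R with h | h
    · have : IntegrableOn k (Icc (0 - R) (0 + R)) := by
        rw [← intervalIntegrable_iff_integrableOn_Icc_of_le (by linarith)]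
        exact hk _ _
      exact this.mono_set hR
    · rw [Icc_eq_empty (by linarith)] at hR
      rw [subset_empty_iff.1 hR]
      simp
  have h := (hgc.hasDerivAt_convolution_right (ContinuousLinearMap.mul ℝ ℝ) hl hg x).differentiableAt
  suffices he : tconv k g = convolution ((Ioi 0).indicator k) g (ContinuousLinearMap.mul ℝ ℝ) volume by
    rw [he]
    exact h
  funext y
  rw [convolution_mul_swap, tconv, ← integral_indicator measurableSet_Ioc]
  congr 1
  ext s
  simp only [indicator, mem_Ioc, mem_Ioi]
  by_cases h0 : 0 < s
  · rcases lt_trichotomy s y with h1 | h1 | h1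
    · simp [h0, h1, h1.le]
    · simp [h1, hk0]
    · simp [h1.not_ge, h1.le.not_gt]
  · simp [h0, hg0 s (not_lt.1 h0)]

theorem aux_par {k k' g : ℝ → ℝ} {b t0 d : ℝ} 
    (hk' : ∀ s, 0 < s → HasDerivAt k (k' s) s) (hkc : ContinuousOn k' (Ioi 0))
    (hd : 0 < d) (hb : 0 ≤ b) (hbt : b + 2 * d ≤ t0)
    (hg : ContinuousOn g (Icc 0 b)) :
    DifferentiableAt ℝ (fun x => ∫ s in Ioc 0 b, k (x - s) * g s) t0 := by
  have hkcont : ContinuousOn k (Ioi 0) := fun s hs => (hk' s hs).continuousAt.continuousWithinAt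
  obtain ⟨B, hB⟩ := (isCompact_Icc (a := d) (b := t0 + d)).exists_bound_of_continuousOn
    (hkc.mono (fun s hs => lt_of_lt_of_le hd hs.1))
  obtain ⟨C, hC⟩ := (isCompact_Icc (a := 0) (b := b)).exists_bound_of_continuousOn hg
  have hcont : ∀ (f : ℝ → ℝ), ContinuousOn f (Ioi 0) → ∀ x ∈ Ioo (t0 - d) (t0 + d),
      ContinuousOn (fun s => f (x - s) * g s) (Icc 0 b) := by
    intro f hf x hx
    refine ContinuousOn.mul (hf.comp (by fun_prop) ?_) hg
    intro s hs
    simp only [mem_Ioi, mem_Icc, mem_Ioo] at *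
    linarith
  have hint : ∀ (f : ℝ → ℝ), ContinuousOn f (Ioi 0) → ∀ x ∈ Ioo (t0 - d) (t0 + d),
      IntegrableOn (fun s => f (x - s) * g s) (Ioc 0 b) := by
    intro f hf x hx
    exact ((hcont f hf x hx).integrableOn_Icc).mono_set Ioc_subset_Icc_self
  have hnb : Ioo (t0 - d) (t0 + d) ∈ 𝓝 t0 := Ioo_mem_nhds (by linarith) (by linarith)
  have ht0 : t0 ∈ Ioo (t0 - d) (t0 + d) := mem_of_mem_nhds hnb
  refine (hasDerivAt_integral_of_dominated_loc_of_deriv_le (μ := volume.restrict (Ioc 0 b))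
    (F := fun x s => k (x - s) * g s)
    (F' := fun x s => k' (x - s) * g s) (bound := fun _ => B * C) (x₀ := t0) hnb ?_ ?_ ?_ ?_ ?_ ?_).2.differentiableAt
  · filter_upwards [hnb] with x hx
    exact (hint k hkcont x hx).aestronglyMeasurable
  · exact hint k hkcont _ ht0
  · exact (hint k' hkc _ ht0).aestronglyMeasurable
  · filter_upwards [ae_restrict_mem measurableSet_Ioc] with s hs x hx
    rw [norm_mul]
    have h1 := hB (x - s) (by simp only [mem_Icc, mem_Ioc, mem_Ioo] at *; constructor <;> linarith)
    have h2 := hC s (Ioc_subset_Icc_self hs)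
    exact mul_le_mul h1 h2 (norm_nonneg _) ((norm_nonneg _).trans h1)
  · exact integrable_const _
  · filter_upwards [ae_restrict_mem measurableSet_Ioc] with s hs x hx
    have h1 : HasDerivAt k (k' (x - s)) (x - s) := hk' _ (by
      simp only [mem_Ioc, mem_Ioo] at *; linarith)
    exact (h1.comp_sub_const x s).mul_const _

theorem aux_diff {k k' v : ℝ → ℝ} {T t0 : ℝ} (hk : ∀ a b, IntervalIntegrable k volume a b)
    (hk0 : k 0 = 0) (hk' : ∀ s, 0 < s → HasDerivAt k (k' s) s) (hkc : ContinuousOn k' (Ioi 0))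
    (ht0 : t0 ∈ Ioo 0 T) (hv : ContinuousOn v (Icc 0 T)) (hv1 : ContDiffOn ℝ 1 v (Ioo 0 T)) :
    DifferentiableAt ℝ (tconv k v) t0 := by
  obtain ⟨d, hd, hd1, hd2⟩ : ∃ d > 0, 4 * d < t0 ∧ 4 * d < T - t0 := by
    refine ⟨min t0 (T - t0) / 8, ?_, ?_, ?_⟩
    · have := lt_min ht0.1 (sub_pos.2 ht0.2)
      positivity
    · have := min_le_left t0 (T - t0)
      have := ht0.1
      linarith
    · have := min_le_right t0 (T - t0)
      have := ht0.2
      linarith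
  let φ : ContDiffBump t0 := ⟨2 * d, 3 * d, by linarith, by linarith⟩
  have hφs : ∀ s, φ s ≠ 0 → s ∈ Ioo (t0 - 3 * d) (t0 + 3 * d) := by
    intro s hs
    have : s ∈ Function.support φ := hs
    rw [φ.support_eq, Real.ball_eq_Ioo] at this
    exact this
  have hφ1 : ∀ s ∈ Icc (t0 - 2 * d) (t0 + 2 * d), φ s = 1 := by
    intro s hs
    apply φ.one_of_mem_closedBall
    rw [Real.closedBall_eq_Icc]
    exact hs
  set g : ℝ → ℝ := fun s => φ s * v s with hgdef
  have hgC : ContDiff ℝ 1 g := by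
    rw [contDiff_iff_contDiffAt]
    intro s
    by_cases hs : s ∈ tsupport g
    swap
    · exact contDiffAt_const.congr_of_eventuallyEq (notMem_tsupport_iff_eventuallyEq.1 hs)
    have h1 : s ∈ tsupport φ := tsupport_mul_subset_left hs
    rw [φ.tsupport_eq, Real.closedBall_eq_Icc] at h1
    have h1' : s ∈ Icc (t0 - 3 * d) (t0 + 3 * d) := h1
    have h2 : s ∈ Ioo 0 T := by
      simp only [mem_Icc, mem_Ioo] at *
      constructor <;> linarith
    exact φ.contDiffAt.mul (hv1.contDiffAt (isOpen_Ioo.mem_nhds h2))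
  have hgc : HasCompactSupport g := φ.hasCompactSupport.mul_right
  have hg0 : ∀ s ≤ 0, g s = 0 := by
    intro s hs
    by_contra h
    have := (hφs s (left_ne_zero_of_mul h)).1
    linarith
  have hD2 := aux_conv hk hk0 hgC hgc hg0 t0
  have hw : ContinuousOn (fun s => v s - g s) (Icc 0 T) := hv.sub hgC.continuous.continuousOn
  have hD1 := aux_par (g := fun s => v s - g s) (b := t0 - 2 * d) (t0 := t0) hk' hkc hd (by linarith)
    (by linarith) (hw.mono (Icc_subset_Icc_right (by linarith)))
  refine (hD1.add hD2).congr_of_eventuallyEq ?_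
  filter_upwards [Ioo_mem_nhds (show t0 - d < t0 by linarith) (show t0 < t0 + d by linarith)] with x hx
  have hx1 := hx.1
  have hx2 := hx.2
  have i1 : IntegrableOn (fun s => k (x - s) * g s) (Ioc 0 x) :=
    aux_int hk (by linarith) hgC.continuous.continuousOn
  have i2 : IntegrableOn (fun s => k (x - s) * (v s - g s)) (Ioc 0 x) :=
    aux_int hk (by linarith) (hw.mono (Icc_subset_Icc_right (by linarith)))
  have e1 : ∫ s in Ioc 0 (t0 - 2 * d), k (x - s) * (v s - g s)
      = ∫ s in Ioc 0 x, k (x - s) * (v s - g s) := by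
    refine (setIntegral_eq_of_subset_of_forall_sdiff_eq_zero measurableSet_Ioc
      (Ioc_subset_Ioc_right (by linarith)) ?_).symm
    rintro s ⟨hs1, hs2⟩
    have : t0 - 2 * d < s := by
      by_contra h
      exact hs2 ⟨hs1.1, not_lt.1 h⟩
    have := hφ1 s ⟨this.le, by linarith [hs1.2]⟩
    simp [hgdef, this]
  simp only [Pi.add_apply]
  rw [e1, tconv, tconv, ← integral_add i2 i1]
  congr 1
  ext s
  ring

theorem aux_pos {k v : ℝ → ℝ} {t0 D C e : ℝ} (hk : ∀ a b, IntervalIntegrable k volume a b)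
    (hk0 : k 0 = 0) (hkp : ∀ s, 0 < s → 0 < k s) (hka : ∀ a b, 0 < a → a ≤ b → k b ≤ k a)
    (ht0 : 0 < t0) (hv : ContinuousOn v (Icc 0 t0)) (hmax : ∀ s ∈ Icc 0 t0, v s ≤ v t0)
    (hm : 0 < v t0) (he : 0 < e) (hC : 0 ≤ C)
    (hlip : ∀ s ∈ Icc 0 t0, t0 - e < s → v t0 - v s ≤ C * (t0 - s))
    (hD : HasDerivAt (tconv k v) D t0) : 0 < D := by
  have hnn : ∀ s, 0 ≤ s → 0 ≤ k s := by
    intro s hs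
    rcases hs.eq_or_lt with h | h
    · rw [← h, hk0]
    · exact (hkp s h).le
  set K : ℝ → ℝ := fun h => ∫ s in (0:ℝ)..h, k s with hK
  have hKc : Continuous K := intervalIntegral.continuous_primitive hk 0
  have key : ∀ t ∈ Ioo (max 0 (t0 - e)) t0,
      v t0 * k t0 - C * K (t0 - t) ≤ slope (tconv k v) t0 t := by
    intro t ht
    have ht1 : 0 < t := (le_max_left _ _).trans_lt ht.1
    have ht2 : t0 - e < t := (le_max_right _ _).trans_lt ht.1
    have ht3 := ht.2
    have hkt : ∀ x a b, IntervalIntegrable (fun s => k (x - s)) volume a b := by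
      intro x a b
      simpa using (hk (x - a) (x - b)).comp_sub_left x
    have hkv : ∀ x a b, 0 ≤ a → a ≤ b → b ≤ t0 →
        IntervalIntegrable (fun s => k (x - s) * v s) volume a b := by
      intro x a b h1 h2 h3
      rw [intervalIntegrable_iff_integrableOn_Ioc_of_le h2]
      exact aux_int hk h2 (hv.mono (Icc_subset_Icc h1 h3))
    have c : ∀ x, 0 ≤ x → tconv k v x = ∫ s in (0:ℝ)..x, k (x - s) * v s := by
      intro x hx
      rw [intervalIntegral.integral_of_le hx, tconv]
    have cK : ∀ x a b, ∫ s in a..b, k (x - s) = K (x - a) - K (x - b) := by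
      intro x a b
      rw [intervalIntegral.integral_comp_sub_left (fun s => k s) x]
      rw [hK]
      simp only
      rw [intervalIntegral.integral_interval_sub_left (hk _ _) (hk _ _)]
    have s0 : tconv k v t0 = (∫ s in (0:ℝ)..t, k (t0 - s) * v s) + ∫ s in t..t0, k (t0 - s) * v s := by
      rw [c t0 ht0.le, intervalIntegral.integral_add_adjacent_intervals
        (hkv _ _ _ le_rfl ht1.le ht3.le) (hkv _ _ _ ht1.le ht3.le le_rfl)]
    have s1 : v t0 * ((∫ s in (0:ℝ)..t, k (t0 - s)) - ∫ s in (0:ℝ)..t, k (t - s)) ≤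
        (∫ s in (0:ℝ)..t, k (t0 - s) * v s) - ∫ s in (0:ℝ)..t, k (t - s) * v s := by
      rw [← intervalIntegral.integral_sub (hkt _ _ _) (hkt _ _ _),
        ← intervalIntegral.integral_sub (hkv _ _ _ le_rfl ht1.le ht3.le)
          (hkv _ _ _ le_rfl ht1.le ht3.le), ← intervalIntegral.integral_const_mul]
      apply intervalIntegral.integral_mono_on_of_le_Ioo ht1.le
      · exact ((hkt _ _ _).sub (hkt _ _ _)).const_mul _
      · exact (hkv _ _ _ le_rfl ht1.le ht3.le).sub (hkv _ _ _ le_rfl ht1.le ht3.le)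
      · intro s hs
        have h1 := hka (t - s) (t0 - s) (by linarith [hs.2]) (by linarith)
        have h2 := hmax s ⟨hs.1.le, by linarith [hs.2]⟩
        nlinarith
    have s2 : (v t0 - C * (t0 - t)) * (∫ s in t..t0, k (t0 - s)) ≤ ∫ s in t..t0, k (t0 - s) * v s := by
      rw [← intervalIntegral.integral_const_mul]
      apply intervalIntegral.integral_mono_on ht3.le
      · exact (hkt _ _ _).const_mul _
      · exact hkv _ _ _ ht1.le ht3.le le_rfl
      · intro s hs
        have h1 := hnn (t0 - s) (by linarith [hs.2])
        have h2 := hlip s ⟨by linarith [hs.1], hs.2⟩ (by linarith [hs.1])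
        have h3 : C * (t0 - s) ≤ C * (t0 - t) := mul_le_mul_of_nonneg_left (by linarith [hs.1]) hC
        nlinarith
    have s3 : k t0 * (t0 - t) ≤ K t0 - K t := by
      rw [hK]
      simp only
      rw [intervalIntegral.integral_interval_sub_left (hk _ _) (hk _ _)]
      have : k t0 * (t0 - t) = ∫ s in t..t0, k t0 := by
        simp [mul_comm]
      rw [this]
      apply intervalIntegral.integral_mono_on ht3.le (by simp) (hk _ _)
      intro s hs
      exact hka _ _ (by linarith [hs.1]) hs.2
    have K0 : K 0 = 0 := by simp [hK]
    rw [cK, cK] at s1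
    rw [cK] at s2
    simp only [sub_zero, sub_self, K0] at s1 s2
    rw [slope_comm, slope_def_field, le_div_iff₀ (by linarith), s0, c t ht1.le]
    have := mul_le_mul_of_nonneg_left s3 hm.le
    nlinarith
  have hleft := (hasDerivAt_iff_tendsto_slope_left_right.1 hD).1
  have hlim : Tendsto (fun t => v t0 * k t0 - C * K (t0 - t)) (𝓝[<] t0) (𝓝 (v t0 * k t0)) := by
    have : Continuous (fun t => v t0 * k t0 - C * K (t0 - t)) := by fun_prop
    have h := this.tendsto t0
    simp only [sub_self] at h
    have K0 : K 0 = 0 := by simp [hK]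
    rw [K0, mul_zero, sub_zero] at h
    exact h.mono_left nhdsWithin_le_nhds
  have hle : v t0 * k t0 ≤ D := by
    refine le_of_tendsto_of_tendsto hlim hleft ?_
    filter_upwards [Ioo_mem_nhdsLT (show max 0 (t0 - e) < t0 from max_lt ht0 (by linarith))] with t ht
    exact key t ht
  exact (mul_pos hm (hkp t0 ht0)).trans_le hle

theorem aux_RL {α T t0 : ℝ} {v : ℝ → ℝ} (hα : α ∈ Ioo (0:ℝ) 1) (ht0 : t0 ∈ Ioo 0 T)
    (hv : ContinuousOn v (Icc 0 T)) (hv1 : ContDiffOn ℝ 1 v (Ioo 0 T))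
    (hmax : ∀ s ∈ Icc 0 t0, v s ≤ v t0) (hm : 0 < v t0) : 0 < riemannLiouville α v t0 := by
  have hΓ : 0 < Real.Gamma (1 - α) := Real.Gamma_pos_of_pos (by linarith [hα.2])
  have hk : ∀ a b, IntervalIntegrable (fun s : ℝ => s ^ (-α) / Real.Gamma (1 - α)) volume a b :=
    fun a b => (intervalIntegral.intervalIntegrable_rpow' (by linarith [hα.2])).div_const _
  have hk0 : (fun s : ℝ => s ^ (-α) / Real.Gamma (1 - α)) 0 = 0 := by
    simp [Real.zero_rpow (neg_ne_zero.2 hα.1.ne')]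
  have hd := aux_diff (k := fun s : ℝ => s ^ (-α) / Real.Gamma (1 - α))
    (k' := fun s : ℝ => (-α * s ^ (-α - 1)) / Real.Gamma (1 - α)) hk hk0
    (fun s hs => (Real.hasDerivAt_rpow_const (Or.inl hs.ne')).div_const _)
    (by
      intro s hs
      have hs' : s ≠ 0 := ne_of_gt hs
      exact ((continuousAt_const.mul (Real.continuousAt_rpow_const _ _ (Or.inl hs'))).div_const _).continuousWithinAt) ht0 hv hv1
  have hvd : ContDiffAt ℝ 1 v t0 := hv1.contDiffAt (isOpen_Ioo.mem_nhds ht0)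
  obtain ⟨L, U, hU, hL⟩ := hvd.exists_lipschitzOnWith
  obtain ⟨e, he, heU⟩ := Metric.mem_nhds_iff.1 hU
  refine aux_pos (e := e) (C := L) hk hk0 (fun s hs => by positivity) ?_ ht0.1
    (hv.mono (Icc_subset_Icc_right ht0.2.le)) hmax hm he L.2 ?_ hd.hasDerivAt
  · intro a b ha hab
    have := Real.rpow_le_rpow_of_nonpos ha hab (show -α ≤ 0 by linarith [hα.1])
    gcongr
  · intro s hs hse
    have h1 : s ∈ U := heU (by
      rw [Real.ball_eq_Ioo]
      exact ⟨hse, by linarith [hs.2]⟩)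
    have h2 := hL.dist_le_mul t0 (mem_of_mem_nhds hU) s h1
    rw [Real.dist_eq, Real.dist_eq, abs_of_nonneg (by linarith [hs.2] : 0 ≤ t0 - s)] at h2
    exact (le_abs_self _).trans h2


/-- Weak maximum principle: the maximum of a subsolution over `closure Q_T`
is attained on the parabolic boundary. -/
theorem maximum_principle (N : ℕ) (hN : 1 ≤ N) (α β T : ℝ)
    (hα : α ∈ Ioo (0:ℝ) 1) (hβ : β ∈ Ioo (0:ℝ) 1) (hT : 0 < T)
    (Ω : Set (EuclideanSpace ℝ (Fin N)))
    (hΩo : IsOpen Ω) (hΩc : IsConnected Ω) (hΩb : Bornology.IsBounded Ω)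
    (u : EuclideanSpace ℝ (Fin N) → ℝ → ℝ)
    (hx : ∀ t ∈ Ioo 0 T, ContDiffOn ℝ 2 (fun x => u x t) Ω)
    (ht : ∀ x ∈ Ω, ContDiffOn ℝ 1 (u x) (Ioo 0 T))
    (hc : ContinuousOn (fun p : EuclideanSpace ℝ (Fin N) × ℝ => u p.1 p.2)
      (closure Ω ×ˢ Icc 0 T))
    (hext : ∀ x ∉ Ω, ∀ t, 0 ≤ t → u x t = 0)
    -- subsolution inequality in Ω × (0,T]
    (hineq : ∀ x ∈ Ω, ∀ t ∈ Ioc 0 T,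
      riemannLiouville α (fun s => u x s - u x 0) t
            + fracLap N β (fun y => u y t) x ≤ 0) :
    sSup ((fun p : EuclideanSpace ℝ (Fin N) × ℝ => u p.1 p.2) ''
        (closure Ω ×ˢ Icc 0 T))
      = sSup ((fun p : EuclideanSpace ℝ (Fin N) × ℝ => u p.1 p.2) ''
        ((Ω ×ˢ ({0} : Set ℝ)) ∪ (frontier Ω ×ˢ Icc 0 T))) := by
  classical
  set f : EuclideanSpace ℝ (Fin N) × ℝ → ℝ := fun p => u p.1 p.2 with hf
  set P : Set (EuclideanSpace ℝ (Fin N) × ℝ) :=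
    (Ω ×ˢ ({0} : Set ℝ)) ∪ (frontier Ω ×ˢ Icc 0 T) with hP
  have hKc : IsCompact (closure Ω) := hΩb.isCompact_closure
  have hsub : P ⊆ closure Ω ×ˢ Icc 0 T := by
    rintro ⟨x, t⟩ (⟨h1, h2⟩ | ⟨h1, h2⟩)
    · simp only [mem_singleton_iff] at h2
      subst h2
      exact ⟨subset_closure h1, le_rfl, hT.le⟩
    · exact ⟨frontier_subset_closure h1, h2⟩
  have hbdA : BddAbove (f '' (closure Ω ×ˢ Icc 0 T)) :=
    ((hKc.prod isCompact_Icc).image_of_continuousOn hc).bddAbove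
  have hbdP : BddAbove (f '' P) := hbdA.mono (image_mono hsub)
  obtain ⟨z, hz⟩ := hΩc.nonempty
  have hneP : (f '' P).Nonempty := ⟨f (z, 0), (z, 0), Or.inl ⟨hz, rfl⟩, rfl⟩
  have hM0 : 0 ≤ sSup (f '' P) := by
    haveI : Nonempty (Fin N) := ⟨⟨0, hN⟩⟩
    have : (frontier Ω).Nonempty := by
      rw [nonempty_frontier_iff]
      refine ⟨⟨z, hz⟩, ?_⟩
      rintro rfl
      exact NormedSpace.unbounded_univ ℝ (EuclideanSpace ℝ (Fin N)) hΩb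
    obtain ⟨y, hy⟩ := this
    have hyΩ : y ∉ Ω := by
      rw [hΩo.frontier_eq] at hy
      exact hy.2
    have := le_csSup hbdP ⟨(y, 0), Or.inr ⟨hy, le_rfl, hT.le⟩, rfl⟩
    simpa [hf, hext y hyΩ 0 le_rfl] using this
  have hlt : ∀ x ∈ closure Ω, ∀ t ∈ Ico 0 T, u x t ≤ sSup (f '' P) := by
    intro x hxc t htt
    by_contra hcon
    push Not at hcon
    obtain ⟨⟨x0, t0⟩, ⟨hx0, ht0⟩, hmax⟩ := (hKc.prod (isCompact_Icc (a := (0:ℝ)) (b := t))).exists_isMaxOn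
      ⟨(x, t), hxc, htt.1, le_rfl⟩ (hc.mono (prod_mono_right (Icc_subset_Icc_right htt.2.le)))
    simp only at hx0 ht0
    have hmax' : ∀ y ∈ closure Ω, ∀ s ∈ Icc 0 t, u y s ≤ u x0 t0 := fun y hy s hs =>
      hmax (show (y, s) ∈ closure Ω ×ˢ Icc 0 t from ⟨hy, hs⟩)
    have hbig : sSup (f '' P) < u x0 t0 := hcon.trans_le (hmax' x hxc t ⟨htt.1, le_rfl⟩)
    have hx0Ω : x0 ∈ Ω := by
      by_contra h
      rw [hext x0 h t0 ht0.1] at hbig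
      linarith
    have hu0 : u x0 0 ≤ sSup (f '' P) := le_csSup hbdP ⟨(x0, 0), Or.inl ⟨hx0Ω, rfl⟩, rfl⟩
    have ht0p : 0 < t0 := by
      rcases ht0.1.eq_or_lt with h | h
      · rw [← h] at hbig
        linarith
      · exact h
    have ht0T : t0 ∈ Ioo 0 T := ⟨ht0p, ht0.2.trans_lt htt.2⟩
    have hi := hineq x0 hx0Ω t0 ⟨ht0p, ht0T.2.le⟩
    have hRL : 0 < riemannLiouville α (fun s => u x0 s - u x0 0) t0 := by
      apply aux_RL hα ht0T
      · refine ContinuousOn.sub ?_ continuousOn_const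
        exact hc.comp (f := fun s : ℝ => (x0, s)) (by fun_prop) (fun s hs => ⟨hx0, hs⟩)
      · exact (ht x0 hx0Ω).sub contDiffOn_const
      · intro s hs
        have := hmax' x0 hx0 s ⟨hs.1, hs.2.trans ht0.2⟩
        linarith
      · linarith
    have hFL : 0 ≤ fracLap N β (fun y => u y t0) x0 := by
      unfold fracLap
      apply mul_nonneg
      · unfold fracLapConst
        have h1 := hβ.1
        have h2 : 0 < Real.Gamma (1 - β) := Real.Gamma_pos_of_pos (by linarith [hβ.2])
        have h3 : 0 < Real.Gamma ((N + 2 * β) / 2) := Real.Gamma_pos_of_pos (by positivity)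
        positivity
      · apply integral_nonneg
        intro y
        have : 0 ≤ u x0 t0 - u y t0 := by
          by_cases hy : y ∈ Ω
          · linarith [hmax' y (subset_closure hy) t0 ht0]
          · rw [hext y hy t0 ht0.1]
            linarith
        simp only [Pi.zero_apply]
        positivity
    linarith
  apply le_antisymm
  · refine csSup_le (hneP.mono (image_mono hsub)) ?_
    rintro _ ⟨⟨x, t⟩, ⟨hxc, htt⟩, rfl⟩
    simp only at hxc htt
    change u x t ≤ _
    rcases htt.2.lt_or_eq with h | h
    · exact hlt x hxc t ⟨htt.1, h⟩
    · subst h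
      have hcx : ContinuousOn (u x) (Icc 0 t) :=
        hc.comp (f := fun s : ℝ => (x, s)) (by fun_prop) (fun s hs => ⟨hxc, hs⟩)
      have hw : Tendsto (u x) (𝓝[<] t) (𝓝 (u x t)) := by
        have := (hcx t ⟨hT.le, le_rfl⟩).mono (Ico_subset_Icc_self)
        rw [ContinuousWithinAt, nhdsWithin_Ico_eq_nhdsLT hT] at this
        exact this
      refine le_of_tendsto hw ?_
      filter_upwards [Ico_mem_nhdsLT hT] with s hs
      exact hlt x hxc s hs
  · exact csSup_le_csSup hbdA hneP (image_mono hsub)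
end
end
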